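/- Let μ be a signed charge on a semi-ring 𝒮 with values in [-∞,∞) (i.e. μ < ∞). The charges μ⁺ := μ ∨ 0 and μ⁻ := (-μ) ∨ 0 satisfy μ⁺ - μ = μ⁻ and |μ| = μ⁺ + μ⁻. If μ is a signed measure, then μ⁺ and μ⁻ are measures. -/

import Mathlib

/-!
Both identities come from comparing the sums `∑ max (μ C) 0` and `∑ max (-μ C) 0` over one and the
same finite partition of `A`. If `μ A` is finite, so is `μ` on every part, and finite additivity
says that the two sums differ by the constant `μ A` (`sum_max_eq`); taking suprema gives
`μ⁺ - μ = μ⁻`. The constant difference also shows that the two sums are ordered in the same way as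
the partition varies, so that `μ⁺ + μ⁻` is the supremum of their sum, which is `|μ|`. If
`μ A = -∞`, both sides of each identity are `+∞`.

For countable additivity, let `g` be `max μ 0` or `max (-μ) 0`, regarded as a `[0, ∞]`-valued set
function. Its partition supremum is countably additive as soon as `g` is countably subadditive on
`S` (`partSup_iUnion`). The bound `≤` follows by cutting each part `C` of a partition of `⋃ n, A n`
into the pieces `C ∩ A n`; the bound `≥` is finite superadditivity, which rests on the semi-ring
axiom that `(⋃ n, A n) \ (A 0 ∪ … ∪ A k)` has a finite partition.

The subadditivity of `max (±μ) 0` uses only `max (∑ f) 0 ≤ ∑ max f 0` (`toENNReal_tsum_le`,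
`toENNReal_neg_tsum_le`). In `EReal` this holds even when `f` is not summable, where `∑' n, f n`
is `0`. The sign can be pulled out of a sum because `μ` omits the value `+∞`.
-/

open MeasureTheory Set
open scoped ENNReal NNReal BigOperators

namespace SignedCharges

variable {Ω : Type*}

/-- `P` is a finite partition of `A` by elements of the family `S`. -/
def IsPartition (S : Set (Set Ω)) (A : Set Ω) (P : Finset (Set Ω)) : Prop :=
  ↑P ⊆ S ∧ (P : Set (Set Ω)).PairwiseDisjoint id ∧ ⋃₀ ↑P = A

/-- The partition-supremum `μ_F` of a family `F = (ν j)` of `EReal`-valued set functions: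
`μ_F(A) = sup` over finite partitions `Π` of `A` by elements of `S` of `Σ_{C ∈ Π} sup_j ν j C`. -/
noncomputable def supFun {J : Type*} (S : Set (Set Ω)) (ν : J → Set Ω → EReal)
    (A : Set Ω) : EReal :=
  ⨆ P : Finset (Set Ω), ⨆ _ : IsPartition S A P, ∑ C ∈ P, ⨆ j, ν j C

/-- The admissibility hypothesis: `sup_j ν j A > -∞` for every `A ∈ S`. -/
def Admissible {J : Type*} (S : Set (Set Ω)) (ν : J → Set Ω → EReal) : Prop :=
  ∀ A ∈ S, ⊥ < ⨆ j, ν j A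

/-- An `EReal`-valued signed charge on `S`: vanishes on `∅`, finitely additive on finite
disjoint unions within `S`, and omits at least one of the values `+∞`, `-∞` on `S`. -/
structure IsCharge (S : Set (Set Ω)) (μ : Set Ω → EReal) : Prop where
  empty : μ ∅ = 0
  additive : ∀ (n : ℕ) (A : Fin n → Set Ω), (∀ i, A i ∈ S) →
    Pairwise (Function.onFun Disjoint A) → (⋃ i, A i) ∈ S → μ (⋃ i, A i) = ∑ i, μ (A i)
  omits : (∀ A ∈ S, μ A ≠ ⊤) ∨ (∀ A ∈ S, μ A ≠ ⊥)

/-- A finite (real-valued) signed charge on `S`. -/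
structure IsRealCharge (S : Set (Set Ω)) (μ : Set Ω → ℝ) : Prop where
  empty : μ ∅ = 0
  additive : ∀ (n : ℕ) (A : Fin n → Set Ω), (∀ i, A i ∈ S) →
    Pairwise (Function.onFun Disjoint A) → (⋃ i, A i) ∈ S → μ (⋃ i, A i) = ∑ i, μ (A i)

/-- Countable additivity for a real-valued set function (unconditional convergence). -/
def CountablyAdditiveR (S : Set (Set Ω)) (μ : Set Ω → ℝ) : Prop :=
  ∀ A : ℕ → Set Ω, (∀ n, A n ∈ S) → Pairwise (Function.onFun Disjoint A) →
    (⋃ n, A n) ∈ S → HasSum (fun n => μ (A n)) (μ (⋃ n, A n))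

/-- Countable sub-additivity for an `EReal`-valued set function. -/
def CountablySubadditiveE (S : Set (Set Ω)) (μ : Set Ω → EReal) : Prop :=
  ∀ A : ℕ → Set Ω, (∀ n, A n ∈ S) → Pairwise (Function.onFun Disjoint A) →
    (⋃ n, A n) ∈ S → μ (⋃ n, A n) ≤ ∑' n, μ (A n)

/-- Countable additivity for an `EReal`-valued set function. -/
def CountablyAdditiveE (S : Set (Set Ω)) (μ : Set Ω → EReal) : Prop :=
  ∀ A : ℕ → Set Ω, (∀ n, A n ∈ S) → Pairwise (Function.onFun Disjoint A) →
    (⋃ n, A n) ∈ S → μ (⋃ n, A n) = ∑' n, μ (A n)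

/-- `μ⁺ = μ ∨ 0` : sup over finite partitions of `Σ_{C} max (μ C) 0`. -/
noncomputable def pos (S : Set (Set Ω)) (μ : Set Ω → EReal) (A : Set Ω) : EReal :=
  ⨆ P : Finset (Set Ω), ⨆ _ : IsPartition S A P, ∑ C ∈ P, max (μ C) 0

/-- `μ⁻ = (-μ) ∨ 0` : sup over finite partitions of `Σ_{C} max (-μ C) 0`. -/
noncomputable def neg (S : Set (Set Ω)) (μ : Set Ω → EReal) (A : Set Ω) : EReal :=
  ⨆ P : Finset (Set Ω), ⨆ _ : IsPartition S A P, ∑ C ∈ P, max (-μ C) 0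

/-- The variation `|μ|` : sup over finite partitions of `Σ_{C} |μ C|`. -/
noncomputable def var (S : Set (Set Ω)) (μ : Set Ω → EReal) (A : Set Ω) : EReal :=
  ⨆ P : Finset (Set Ω), ⨆ _ : IsPartition S A P, ∑ C ∈ P, max (μ C) (-μ C)

/-- The infimum `α ∧ β` of two nonnegative charges:
inf over finite partitions of `Σ_{C} min (α C) (β C)`. -/
noncomputable def infC (S : Set (Set Ω)) (α β : Set Ω → EReal) (A : Set Ω) : EReal :=
  ⨅ P : Finset (Set Ω), ⨅ _ : IsPartition S A P, ∑ C ∈ P, min (α C) (β C)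

/-- The ring generated by a semi-ring: finite unions of elements of `S`. -/
def genRing (S : Set (Set Ω)) : Set (Set Ω) :=
  {A | ∃ P : Finset (Set Ω), ↑P ⊆ S ∧ A = ⋃₀ ↑P}

/-- Coercion of a real-valued set function to an `EReal`-valued one. -/
def toE (μ : Set Ω → ℝ) : Set Ω → EReal := fun A => (μ A : EReal)

/-- `μ` has finite variation on `S`. -/
def FiniteVar (S : Set (Set Ω)) (μ : Set Ω → ℝ) : Prop :=
  ∀ A ∈ S, var S (toE μ) A ≠ ⊤

/-! ### Finite partitions -/

lemma IsPartition.subset {S : Set (Set Ω)} {A : Set Ω} {P : Finset (Set Ω)}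
    (h : IsPartition S A P) {C : Set Ω} (hC : C ∈ P) : C ⊆ A := by
  rw [← h.2.2]
  exact Set.subset_sUnion_of_mem hC

lemma isPartition_singleton {S : Set (Set Ω)} {A : Set Ω} (hA : A ∈ S) :
    IsPartition S A {A} := by
  refine ⟨by simpa using hA, by simp, by simp⟩

open Classical in
lemma IsPartition.union {S : Set (Set Ω)} {A B : Set Ω} {P Q : Finset (Set Ω)}
    (hP : IsPartition S A P) (hQ : IsPartition S B Q) (hAB : Disjoint A B) :
    IsPartition S (A ∪ B) (P ∪ Q) := by
  refine ⟨?_, ?_, ?_⟩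
  · rw [Finset.coe_union]
    exact Set.union_subset hP.1 hQ.1
  · rw [Finset.coe_union, Set.pairwiseDisjoint_union]
    exact ⟨hP.2.1, hQ.2.1, fun C hC D hD _ => hAB.mono (hP.subset hC) (hQ.subset hD)⟩
  · rw [Finset.coe_union, Set.sUnion_union, hP.2.2, hQ.2.2]

open Classical in
lemma IsPartition.inter_image {S : Set (Set Ω)} (hS : IsSetSemiring S) {A B : Set Ω}
    {P : Finset (Set Ω)} (hP : IsPartition S A P) (hB : B ∈ S) (hBA : B ⊆ A) :
    IsPartition S B (P.image (fun C => C ∩ B)) := by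
  refine ⟨?_, ?_, ?_⟩
  · intro D hD
    obtain ⟨C, hC, rfl⟩ := Finset.mem_image.1 (Finset.mem_coe.1 hD)
    exact hS.inter_mem _ (hP.1 hC) _ hB
  · intro D hD E hE hne
    obtain ⟨C, hC, rfl⟩ := Finset.mem_image.1 (Finset.mem_coe.1 hD)
    obtain ⟨C', hC', rfl⟩ := Finset.mem_image.1 (Finset.mem_coe.1 hE)
    have : C ≠ C' := by rintro rfl; exact hne rfl
    exact (hP.2.1 hC hC' this).mono inter_subset_left inter_subset_left
  · rw [Finset.coe_image, Set.sUnion_image, ← Set.iUnion₂_inter, ← Set.sUnion_eq_biUnion,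
      hP.2.2]
    exact Set.inter_eq_right.2 hBA

lemma IsCharge.sum_partition {S : Set (Set Ω)} {μ : Set Ω → EReal} (hμ : IsCharge S μ)
    {A : Set Ω} (hA : A ∈ S) {P : Finset (Set Ω)} (hP : IsPartition S A P) :
    ∑ C ∈ P, μ C = μ A := by
  have hU : (⋃ i, ((P.equivFin.symm i : P) : Set Ω)) = A := by
    rw [P.equivFin.symm.surjective.iUnion_comp (fun x : P => (x : Set Ω)), ← hP.2.2,
      Set.sUnion_eq_iUnion]
    rfl
  have h := hμ.additive P.card (fun i => (P.equivFin.symm i : Set Ω))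
    (fun i => hP.1 (P.equivFin.symm i).2)
    (fun i j hij => hP.2.1 (P.equivFin.symm i).2 (P.equivFin.symm j).2
      (fun h => hij (P.equivFin.symm.injective (Subtype.ext h))))
    (by rw [hU]; exact hA)
  rw [hU] at h
  rw [h, Equiv.sum_comp P.equivFin.symm (fun x : P => μ x), Finset.sum_coe_sort P μ]

/-! ### Partition suprema of nonnegative set functions -/

/-- The supremum of `∑ C ∈ P, g C` over the finite partitions `P` of `A` by elements of `S`, for a
set function `g` with values in `[0, ∞]`. It is `0` if `A` has no such partition. -/
noncomputable def partSup (S : Set (Set Ω)) (g : Set Ω → ℝ≥0∞) (A : Set Ω) : ℝ≥0∞ :=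
  ⨆ P : Finset (Set Ω), ⨆ _ : IsPartition S A P, ∑ C ∈ P, g C

lemma sum_le_partSup {S : Set (Set Ω)} (g : Set Ω → ℝ≥0∞) {A : Set Ω} {P : Finset (Set Ω)}
    (hP : IsPartition S A P) : ∑ C ∈ P, g C ≤ partSup S g A :=
  le_iSup₂ (f := fun (P : Finset (Set Ω)) (_ : IsPartition S A P) => ∑ C ∈ P, g C) P hP

/-- Superadditivity. The partition hypotheses matter: a set without a finite partition has
partition supremum `0`, so the bound could fail for `A ∪ B`. -/
lemma partSup_add_le {S : Set (Set Ω)} {g : Set Ω → ℝ≥0∞} (h0 : g ∅ = 0) {A B : Set Ω}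
    (hA : ∃ P, IsPartition S A P) (hB : ∃ P, IsPartition S B P) (hAB : Disjoint A B) :
    partSup S g A + partSup S g B ≤ partSup S g (A ∪ B) := by
  classical
  refine ENNReal.biSup_add_biSup_le' hA hB fun P hP Q hQ => ?_
  -- An element common to `P` and `Q` lies in `A ∩ B`, so it is empty and contributes `0`.
  have hI : ∑ C ∈ P ∩ Q, g C = 0 := by
    refine Finset.sum_eq_zero fun C hC => ?_
    rw [Finset.mem_inter] at hC
    rw [Set.subset_empty_iff.1 (hAB (hP.subset hC.1) (hQ.subset hC.2)), h0]
  rw [← Finset.sum_union_inter, hI, add_zero]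
  exact sum_le_partSup g (hP.union hQ hAB)

lemma sum_partSup_le {S : Set (Set Ω)} {g : Set Ω → ℝ≥0∞} (h0 : g ∅ = 0) {A : ℕ → Set Ω}
    (hA : ∀ n, A n ∈ S) (hd : Pairwise (Function.onFun Disjoint A)) (s : Finset ℕ) :
    (∃ P, IsPartition S (⋃ n ∈ s, A n) P) ∧
      ∑ n ∈ s, partSup S g (A n) ≤ partSup S g (⋃ n ∈ s, A n) := by
  classical
  induction s using Finset.induction_on with
  | empty => exact ⟨⟨∅, by simp [IsPartition]⟩, by simp⟩
  | insert a s ha ih =>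
    obtain ⟨⟨P, hP⟩, hle⟩ := ih
    have hdis : Disjoint (A a) (⋃ n ∈ s, A n) := by
      refine Set.disjoint_iUnion₂_right.2 fun n hn => hd ?_
      rintro rfl
      exact ha hn
    rw [Finset.set_biUnion_insert, Finset.sum_insert ha]
    exact ⟨⟨_, (isPartition_singleton (hA a)).union hP hdis⟩,
      (add_le_add_right hle _).trans
        (partSup_add_le h0 ⟨_, isPartition_singleton (hA a)⟩ ⟨P, hP⟩ hdis)⟩

open Classical in
lemma exists_isPartition_diff {S : Set (Set Ω)} (hS : IsSetSemiring S) {A : ℕ → Set Ω}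
    (hA : ∀ n, A n ∈ S) {B : Set Ω} (hB : B ∈ S) (s : Finset ℕ) :
    ∃ P, IsPartition S (B \ ⋃ n ∈ s, A n) P := by
  obtain ⟨P, h1, h2, h3⟩ := hS.exists_disjoint_finset_sdiff_eq hB (I := s.image A) (by
    intro C hC
    obtain ⟨n, -, rfl⟩ := Finset.mem_image.1 (Finset.mem_coe.1 hC)
    exact hA n)
  refine ⟨P, h1, h2, ?_⟩
  rw [← h3, Finset.coe_image, Set.sUnion_image]
  rfl

/-- If `g` is countably subadditive on `S`, then its partition supremum is countably additive. -/
lemma partSup_iUnion {S : Set (Set Ω)} (hS : IsSetSemiring S) {g : Set Ω → ℝ≥0∞} (h0 : g ∅ = 0)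
    (hsub : ∀ A : ℕ → Set Ω, (∀ n, A n ∈ S) → Pairwise (Function.onFun Disjoint A) →
      (⋃ n, A n) ∈ S → g (⋃ n, A n) ≤ ∑' n, g (A n))
    {A : ℕ → Set Ω} (hA : ∀ n, A n ∈ S) (hd : Pairwise (Function.onFun Disjoint A))
    (hU : (⋃ n, A n) ∈ S) :
    partSup S g (⋃ n, A n) = ∑' n, partSup S g (A n) := by
  classical
  apply le_antisymm
  · refine iSup₂_le fun P hP => ?_
    have hC : ∀ C ∈ P, g C ≤ ∑' n, g (C ∩ A n) := by
      intro C hC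
      have hCU : (⋃ n, C ∩ A n) = C := by
        rw [← Set.inter_iUnion]
        exact Set.inter_eq_left.2 (hP.subset hC)
      have h := hsub (fun n => C ∩ A n) (fun n => hS.inter_mem _ (hP.1 hC) _ (hA n))
        (fun i j hij => (hd hij).mono inter_subset_right inter_subset_right)
        (by rw [hCU]; exact hP.1 hC)
      rwa [hCU] at h
    calc ∑ C ∈ P, g C ≤ ∑ C ∈ P, ∑' n, g (C ∩ A n) := Finset.sum_le_sum hC
      _ = ∑' n, ∑ C ∈ P, g (C ∩ A n) := (Summable.tsum_finsetSum fun _ _ => ENNReal.summable).symm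
      _ ≤ ∑' n, partSup S g (A n) := by
        refine ENNReal.tsum_le_tsum fun n => ?_
        have hQ := hP.inter_image hS (hA n) (Set.subset_iUnion A n)
        refine le_trans (le_of_eq ?_) (sum_le_partSup g hQ)
        -- Traces of distinct elements of `P` on `A n` coincide only if both are empty.
        refine (Finset.sum_image_of_disjoint (f := fun C => C ∩ A n) h0 ?_).symm
        intro C hC D hD hne
        exact (hP.2.1 hC hD hne).mono inter_subset_left inter_subset_left
  · refine ENNReal.tsum_le_of_sum_range_le fun n => ?_
    obtain ⟨hex, hle⟩ := sum_partSup_le h0 hA hd (Finset.range n)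
    have hsubset : (⋃ k ∈ Finset.range n, A k) ⊆ ⋃ k, A k :=
      Set.iUnion₂_subset fun k _ => Set.subset_iUnion A k
    calc _ ≤ partSup S g (⋃ k ∈ Finset.range n, A k) := hle
      _ ≤ _ := le_self_add
      _ ≤ _ := partSup_add_le h0 hex (exists_isPartition_diff hS hA hU (Finset.range n))
          Set.disjoint_sdiff_right
      _ = _ := by rw [Set.union_sdiff_cancel hsubset]

/-! ### Extended real arithmetic -/

/-- The inclusion `[0, ∞] → [-∞, ∞]` as an additive homomorphism. -/
noncomputable def coeHom : ℝ≥0∞ →+ EReal where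
  toFun := fun x => (x : EReal)
  map_zero' := EReal.coe_ennreal_zero
  map_add' := EReal.coe_ennreal_add

lemma coe_sum (s : Finset (Set Ω)) (f : Set Ω → ℝ≥0∞) :
    ((∑ i ∈ s, f i : ℝ≥0∞) : EReal) = ∑ i ∈ s, (f i : EReal) :=
  map_sum coeHom f s

lemma coe_tsum (f : ℕ → ℝ≥0∞) : ((∑' n, f n : ℝ≥0∞) : EReal) = ∑' n, (f n : EReal) :=
  ((ENNReal.summable.hasSum (f := f)).map coeHom
    continuous_coe_ennreal_ereal).tsum_eq.symm

/-- If `f` is not summable, the left-hand side is `0`. -/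
lemma toENNReal_tsum_le (f : ℕ → EReal) :
    (∑' n, f n).toENNReal ≤ ∑' n, (f n).toENNReal := by
  by_cases hf : Summable f
  · rw [← EReal.toENNReal_coe (x := ∑' n, (f n).toENNReal)]
    refine EReal.toENNReal_le_toENNReal (hasSum_le_of_sum_le hf.hasSum fun s => ?_)
    calc ∑ n ∈ s, f n ≤ ∑ n ∈ s, ((f n).toENNReal : EReal) :=
          Finset.sum_le_sum fun n _ => by rw [EReal.coe_toENNReal_eq_max]; exact le_max_right _ _
      _ = ((∑ n ∈ s, (f n).toENNReal : ℝ≥0∞) : EReal) := (map_sum coeHom _ s).symm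
      _ ≤ _ := EReal.coe_ennreal_le_coe_ennreal_iff.2 (ENNReal.sum_le_tsum s)
  · simp [tsum_eq_zero_of_not_summable hf]

lemma sum_ne_top {ι : Type*} {f : ι → EReal} {s : Finset ι} (h : ∀ i ∈ s, f i ≠ ⊤) :
    ∑ i ∈ s, f i ≠ ⊤ := by
  classical
  induction s using Finset.induction_on with
  | empty => simp
  | insert a s ha ih =>
    rw [Finset.sum_insert ha]
    exact EReal.add_ne_top (h a (by simp)) (ih fun i hi => h i (by simp [hi]))

lemma sum_neg {ι : Type*} {f : ι → EReal} {s : Finset ι} (h : ∀ i ∈ s, f i ≠ ⊤) :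
    ∑ i ∈ s, -f i = -∑ i ∈ s, f i := by
  classical
  induction s using Finset.induction_on with
  | empty => simp
  | insert a s ha ih =>
    have hs : ∀ i ∈ s, f i ≠ ⊤ := fun i hi => h i (by simp [hi])
    rw [Finset.sum_insert ha, Finset.sum_insert ha, ih hs,
      EReal.neg_add (.inr (sum_ne_top hs)) (.inl (h a (by simp))), sub_eq_add_neg]

lemma toENNReal_neg_tsum_le {f : ℕ → EReal} (h : ∀ n, f n ≠ ⊤) :
    (-∑' n, f n).toENNReal ≤ ∑' n, (-f n).toENNReal := by
  by_cases hf : Summable f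
  · have hs : HasSum (fun n => -f n) (-∑' n, f n) := by
      have := ((continuous_neg (G := EReal)).tendsto (∑' n, f n)).comp hf.hasSum
      refine this.congr fun s => ?_
      exact (sum_neg fun i _ => h i).symm
    rw [← hs.tsum_eq]
    exact toENNReal_tsum_le _
  · simp [tsum_eq_zero_of_not_summable hf]

lemma iSup_sum_max_eq {S : Set (Set Ω)} (ν : Set Ω → EReal) {A : Set Ω} (hA : A ∈ S) :
    (⨆ P : Finset (Set Ω), ⨆ _ : IsPartition S A P, ∑ C ∈ P, max (ν C) 0) =
      (partSup S (fun C => (ν C).toENNReal) A : EReal) := by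
  have hsum : ∀ P : Finset (Set Ω),
      ∑ C ∈ P, max (ν C) 0 = ((∑ C ∈ P, (ν C).toENNReal : ℝ≥0∞) : EReal) := by
    intro P
    rw [coe_sum]
    exact Finset.sum_congr rfl fun C _ => by rw [EReal.coe_toENNReal_eq_max, max_comm]
  apply le_antisymm
  · refine iSup₂_le fun P hP => ?_
    rw [hsum]
    exact EReal.coe_ennreal_le_coe_ennreal_iff.2
      (sum_le_partSup (fun C => (ν C).toENNReal) hP)
  · have hnn : 0 ≤ ⨆ P : Finset (Set Ω), ⨆ _ : IsPartition S A P, ∑ C ∈ P, max (ν C) 0 :=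
      le_iSup₂_of_le {A} (isPartition_singleton hA)
        (Finset.sum_nonneg fun C _ => le_max_right _ _)
    rw [← EReal.coe_toENNReal hnn, EReal.coe_ennreal_le_coe_ennreal_iff]
    refine iSup₂_le fun P hP => ?_
    rw [← EReal.toENNReal_coe (x := ∑ C ∈ P, (ν C).toENNReal), ← hsum]
    exact EReal.toENNReal_le_toENNReal
      (le_iSup₂ (f := fun (P : Finset (Set Ω)) (_ : IsPartition S A P) =>
        ∑ C ∈ P, max (ν C) 0) P hP)

lemma countablyAdditiveE_iSup_sum_max {S : Set (Set Ω)} (hS : IsSetSemiring S)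
    {ν : Set Ω → EReal} (h0 : ν ∅ = 0)
    (hsub : ∀ A : ℕ → Set Ω, (∀ n, A n ∈ S) → Pairwise (Function.onFun Disjoint A) →
      (⋃ n, A n) ∈ S → (ν (⋃ n, A n)).toENNReal ≤ ∑' n, (ν (A n)).toENNReal) :
    CountablyAdditiveE S (fun A => ⨆ P : Finset (Set Ω), ⨆ _ : IsPartition S A P,
      ∑ C ∈ P, max (ν C) 0) := by
  intro A hA hd hU
  simp only [iSup_sum_max_eq ν hU, iSup_sum_max_eq ν (hA _)]
  rw [partSup_iUnion hS (by simp [h0]) hsub hA hd hU, coe_tsum]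

/-! ### Positive part, negative part and variation -/

lemma max_eq_max_neg_add {x : EReal} (h1 : x ≠ ⊤) (h2 : x ≠ ⊥) :
    max x 0 = max (-x) 0 + x := by
  lift x to ℝ using ⟨h1, h2⟩
  rcases le_total x 0 with h | h
  · have h' : (x : EReal) ≤ 0 := by exact_mod_cast h
    have h'' : (0 : EReal) ≤ -(x : EReal) := by exact_mod_cast neg_nonneg.2 h
    rw [max_eq_right h', max_eq_left h'']
    norm_cast
    simp
  · have h' : (0 : EReal) ≤ x := by exact_mod_cast h
    have h'' : -(x : EReal) ≤ 0 := by exact_mod_cast neg_nonpos.2 h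
    rw [max_eq_left h', max_eq_right h'', zero_add]

lemma max_neg_eq_add (x : EReal) : max x (-x) = max x 0 + max (-x) 0 := by
  rcases le_total x 0 with h | h
  · have h' : 0 ≤ -x := by simpa using EReal.neg_le_neg_iff.2 h
    rw [max_eq_right h, max_eq_left h', max_eq_right (h.trans h'), zero_add]
  · have h' : -x ≤ 0 := by simpa using EReal.neg_le_neg_iff.2 h
    rw [max_eq_left h, max_eq_right h', max_eq_left (h'.trans h), add_zero]

/-- On a set of finite charge the positive and negative sums over a finite partition differ by the
charge of the set. -/
lemma sum_max_eq {S : Set (Set Ω)} {μ : Set Ω → EReal} (hμ : IsCharge S μ)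
    (htop : ∀ A ∈ S, μ A ≠ ⊤) {A : Set Ω} (hA : A ∈ S) (hbot : μ A ≠ ⊥)
    {P : Finset (Set Ω)} (hP : IsPartition S A P) :
    ∑ C ∈ P, max (μ C) 0 = ∑ C ∈ P, max (-μ C) 0 + μ A := by
  classical
  rw [← hμ.sum_partition hA hP] at hbot ⊢
  rw [← Finset.sum_add_distrib]
  refine Finset.sum_congr rfl fun C hC => max_eq_max_neg_add (htop C (hP.1 hC)) fun h => hbot ?_
  rw [← Finset.add_sum_erase P μ hC, h, EReal.bot_add]

lemma sum_le_pos {S : Set (Set Ω)} (μ : Set Ω → EReal) {A : Set Ω} {P : Finset (Set Ω)}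
    (hP : IsPartition S A P) : ∑ C ∈ P, max (μ C) 0 ≤ pos S μ A :=
  le_iSup₂ (f := fun (P : Finset (Set Ω)) (_ : IsPartition S A P) => ∑ C ∈ P, max (μ C) 0) P hP

lemma sum_le_neg {S : Set (Set Ω)} (μ : Set Ω → EReal) {A : Set Ω} {P : Finset (Set Ω)}
    (hP : IsPartition S A P) : ∑ C ∈ P, max (-μ C) 0 ≤ neg S μ A :=
  le_iSup₂ (f := fun (P : Finset (Set Ω)) (_ : IsPartition S A P) => ∑ C ∈ P, max (-μ C) 0) P hP

lemma sum_le_var {S : Set (Set Ω)} (μ : Set Ω → EReal) {A : Set Ω} {P : Finset (Set Ω)}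
    (hP : IsPartition S A P) :
    ∑ C ∈ P, max (μ C) 0 + ∑ C ∈ P, max (-μ C) 0 ≤ var S μ A := by
  rw [← Finset.sum_add_distrib]
  simp only [← max_neg_eq_add]
  exact le_iSup₂ (f := fun (P : Finset (Set Ω)) (_ : IsPartition S A P) =>
    ∑ C ∈ P, max (μ C) (-μ C)) P hP

lemma pos_nonneg {S : Set (Set Ω)} (μ : Set Ω → EReal) {A : Set Ω} (hA : A ∈ S) :
    0 ≤ pos S μ A :=
  (Finset.sum_nonneg fun _ _ => le_max_right _ _).trans (sum_le_pos μ (isPartition_singleton hA))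

lemma neg_eq_top {S : Set (Set Ω)} {μ : Set Ω → EReal} {A : Set Ω} (hA : A ∈ S)
    (hbot : μ A = ⊥) : neg S μ A = ⊤ := by
  have h := sum_le_neg μ (isPartition_singleton hA)
  rwa [Finset.sum_singleton, hbot, EReal.neg_bot, max_eq_left le_top, top_le_iff] at h

lemma pos_sub_eq_neg {S : Set (Set Ω)} {μ : Set Ω → EReal} (hμ : IsCharge S μ)
    (htop : ∀ A ∈ S, μ A ≠ ⊤) {A : Set Ω} (hA : A ∈ S) :
    pos S μ A - μ A = neg S μ A := by
  by_cases hbot : μ A = ⊥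
  · rw [neg_eq_top hA hbot, hbot, sub_eq_add_neg, EReal.neg_bot]
    exact EReal.add_top_of_ne_bot (ne_bot_of_le_ne_bot (by simp) (pos_nonneg μ hA))
  · apply le_antisymm
    · refine EReal.sub_le_of_le_add (iSup₂_le fun P hP => ?_)
      rw [sum_max_eq hμ htop hA hbot hP]
      exact add_le_add_left (sum_le_neg μ hP) _
    · refine iSup₂_le fun P hP => ?_
      rw [EReal.le_sub_iff_add_le (.inl hbot) (.inl (htop A hA)),
        ← sum_max_eq hμ htop hA hbot hP]
      exact sum_le_pos μ hP

lemma var_eq_pos_add_neg {S : Set (Set Ω)} {μ : Set Ω → EReal} (hμ : IsCharge S μ)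
    (htop : ∀ A ∈ S, μ A ≠ ⊤) {A : Set Ω} (hA : A ∈ S) :
    var S μ A = pos S μ A + neg S μ A := by
  apply le_antisymm
  · refine iSup₂_le fun P hP => ?_
    simp only [max_neg_eq_add]
    rw [Finset.sum_add_distrib]
    exact add_le_add (sum_le_pos μ hP) (sum_le_neg μ hP)
  by_cases hbot : μ A = ⊥
  · have h := sum_le_var μ (isPartition_singleton hA)
    rw [Finset.sum_singleton, Finset.sum_singleton, ← max_neg_eq_add, hbot, EReal.neg_bot,
      max_eq_right bot_le, top_le_iff] at h
    rw [h]
    exact le_top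
  · refine EReal.add_le_of_forall_lt fun a ha b hb => ?_
    obtain ⟨P, hP, ha⟩ : ∃ P, ∃ _ : IsPartition S A P, a < ∑ C ∈ P, max (μ C) 0 := by
      simpa only [pos, lt_iSup_iff] using ha
    obtain ⟨Q, hQ, hb⟩ : ∃ Q, ∃ _ : IsPartition S A Q, b < ∑ C ∈ Q, max (-μ C) 0 := by
      simpa only [neg, lt_iSup_iff] using hb
    refine (add_le_add ha.le hb.le).trans ?_
    -- The partition with the larger negative sum also has the larger positive sum, since the two
    -- sums differ by the constant `μ A`; so no common refinement is needed.
    rcases le_total (∑ C ∈ Q, max (-μ C) 0) (∑ C ∈ P, max (-μ C) 0) with h | h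
    · exact (add_le_add_right h _).trans (sum_le_var μ hP)
    · refine le_trans (add_le_add_left ?_ _) (sum_le_var μ hQ)
      rw [sum_max_eq hμ htop hA hbot hP, sum_max_eq hμ htop hA hbot hQ]
      exact add_le_add_left h _

/-- for a signed charge `μ` with values in `[-∞, ∞)`,
`μ⁺ - μ = μ⁻` and `|μ| = μ⁺ + μ⁻`; if `μ` is a signed measure then `μ⁺, μ⁻` are measures. -/
theorem statement13 {Ω : Type*} (S : Set (Set Ω)) (hS : MeasureTheory.IsSetSemiring S)
    (μ : Set Ω → EReal) (hμ : IsCharge S μ) (htop : ∀ A ∈ S, μ A ≠ ⊤) :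
    (∀ A ∈ S, pos S μ A - μ A = neg S μ A) ∧
    (∀ A ∈ S, var S μ A = pos S μ A + neg S μ A) ∧
    (CountablyAdditiveE S μ →
      CountablyAdditiveE S (pos S μ) ∧ CountablyAdditiveE S (neg S μ)) := by
  refine ⟨fun A hA => pos_sub_eq_neg hμ htop hA, fun A hA => var_eq_pos_add_neg hμ htop hA,
    fun hca => ⟨countablyAdditiveE_iSup_sum_max (ν := μ) hS hμ.empty fun A hA hd hU => ?_,
      countablyAdditiveE_iSup_sum_max (ν := fun A => -μ A) hS (by simp [hμ.empty])
        fun A hA hd hU => ?_⟩⟩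
  · rw [hca A hA hd hU]
    exact toENNReal_tsum_le _
  · rw [hca A hA hd hU]
    exact toENNReal_neg_tsum_le fun n => htop _ (hA n)

end SignedCharges
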